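/- arXiv:1807.05570 — 5 statements merged into one kernel-verified Lean document; each statement's English description precedes it below -/
import Mathlib

section
/- Let f : (a,b) → ℝ be differentiable at a point t ∈ (a,b) with f(t) > 0, and let g : (a,b) → ℝ ∪ {±∞} be any function with g(t) finite. Then, computing all rates of steepest descent/ascent in the metric space (a,b) with the usual distance, (f·g)^↓(t) = min{ f(t) g^↓_{[t,b)}(t) + f'(t) g(t), f(t) g^↓_{(a,t]}(t) − f'(t) g(t) } and (f·g)^↑(t) = max{ f(t) g^↑_{[t,b)}(t) + f'(t) g(t), f(t) g^↑_{(a,t]}(t) − f'(t) g(t) }. In particular, (f·g)^↓(t) ≥ −|f'(t) g(t)| + f(t) g^↓(t) and (f·g)^↑(t) ≤ |f'(t) g(t)| + f(t) g^↑(t). -/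
/-!
For `y ≠ t` near `t`, with `r = 1 / |y - t|`, the difference quotient of `f * g` splits as
`(f y * g y - f t * g t) * r = f y * ((g y - g t) * r) + (f y - f t) * g t * r`.
On each side of `t` the factor `f y` tends to `f t > 0` and the last summand tends to
`f' * g t` (right) or `-(f' * g t)` (left), so the one-sided rates of `f * g` are the one-sided
rates of `g` under the affine map `x ↦ f t * x ± f' * g t` (`rsd_mul`, `rsa_mul`); that a lower
or upper limit commutes with such asymptotically affine maps, even for infinite values, is
`liminf_affine` and `limsup_affine`. The two-sided rate is the min (max) of the one-sided ones
because the punctured neighbourhood filter is the supremum of the two one-sided filters.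
-/

open Filter Set Metric

/-- The rate of steepest descent of `g` with respect to the set `A` at the point `x`. -/
noncomputable def rsd {X : Type*} [MetricSpace X] (A : Set X) (g : X → EReal) (x : X) : EReal :=
  Filter.liminf (fun y => (g y - g x) * (((dist y x)⁻¹ : ℝ) : EReal)) (nhdsWithin x (A \ {x}))

/-- The rate of steepest ascent of `g` with respect to the set `A` at the point `x`. -/
noncomputable def rsa {X : Type*} [MetricSpace X] (A : Set X) (g : X → EReal) (x : X) : EReal :=
  Filter.limsup (fun y => (g y - g x) * (((dist y x)⁻¹ : ℝ) : EReal)) (nhdsWithin x (A \ {x}))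

/-- One half of `liminf_affine`; the other half is this same inequality applied to the inverse
affine map. -/
lemma le_liminf_affine {α : Type*} {l : Filter α} {u v : α → ℝ} {p c : ℝ} (q : α → EReal)
    (hp : 0 < p) (hu : Tendsto u l (nhds p)) (hv : Tendsto v l (nhds c)) :
    (p : EReal) * liminf q l + (c : EReal) ≤
      liminf (fun y => (u y : EReal) * q y + (v y : EReal)) l := by
  refine EReal.ge_of_forall_gt_iff_ge.1 fun z hz => ?_
  have hL : (((z - c) / p : ℝ) : EReal) < liminf q l := by
    induction h : liminf q l with
    | bot => rw [h, EReal.coe_mul_bot_of_pos hp] at hz; simp at hz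
    | top => exact EReal.coe_lt_top _
    | coe x =>
      rw [h] at hz
      norm_cast at hz ⊢
      rw [div_lt_iff₀ hp]
      linarith
  obtain ⟨m, hm1, hm2⟩ := EReal.lt_iff_exists_real_btwn.1 hL
  have hq : ∀ᶠ y in l, (m : EReal) < q y := eventually_lt_of_lt_liminf hm2
  have hzm : z < p * m + c := by
    have h1 : (z - c) / p < m := by exact_mod_cast hm1
    rw [div_lt_iff₀ hp] at h1
    linarith
  have hev : ∀ᶠ y in l, z < u y * m + v y :=
    ((hu.mul_const m).add hv).eventually_const_lt hzm
  refine le_liminf_of_le (h := ?_)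
  filter_upwards [hq, hev, hu.eventually_const_lt hp] with y h1 h2 h3
  calc (z : EReal) ≤ ((u y * m + v y : ℝ) : EReal) := by exact_mod_cast h2.le
    _ = (u y : EReal) * m + v y := by push_cast; rfl
    _ ≤ _ := by
      gcongr

lemma liminf_affine {α : Type*} {l : Filter α} {u v : α → ℝ} {p c : ℝ} (q : α → EReal)
    (hp : 0 < p) (hu : Tendsto u l (nhds p)) (hv : Tendsto v l (nhds c)) :
    liminf (fun y => (u y : EReal) * q y + (v y : EReal)) l =
      (p : EReal) * liminf q l + (c : EReal) := by
  refine le_antisymm ?_ (le_liminf_affine q hp hu hv)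
  -- `q` is recovered from `u * q + v` by the affine map with coefficients `u⁻¹`, `-(u⁻¹ * v)`.
  have key := le_liminf_affine (fun y => (u y : EReal) * q y + (v y : EReal))
    (inv_pos.2 hp) (hu.inv₀ hp.ne') ((hu.inv₀ hp.ne').mul hv).neg
  have hcongr : liminf (fun y => (((u y)⁻¹ : ℝ) : EReal) * ((u y : EReal) * q y + (v y : EReal))
      + ((-((u y)⁻¹ * v y) : ℝ) : EReal)) l = liminf q l := by
    refine liminf_congr ?_
    filter_upwards [hu.eventually_const_lt hp] with y h3
    induction q y with
    | bot => simp [EReal.coe_mul_bot_of_pos, h3, inv_pos.2 h3]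
    | top =>
      rw [EReal.coe_mul_top_of_pos h3, EReal.top_add_coe,
        EReal.coe_mul_top_of_pos (inv_pos.2 h3), EReal.top_add_coe]
    | coe x =>
      norm_cast
      field_simp
      ring
  -- Solve `key` for the lower limit of `u * q + v`, separating its infinite values.
  rw [hcongr] at key
  generalize liminf (fun y => (u y : EReal) * q y + (v y : EReal)) l = M at key ⊢
  generalize liminf q l = L at key ⊢
  induction M with
  | bot => exact bot_le
  | top =>
    rw [EReal.coe_mul_top_of_pos (inv_pos.2 hp), EReal.top_add_coe, top_le_iff] at key
    rw [key, EReal.coe_mul_top_of_pos hp, EReal.top_add_coe]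
  | coe x =>
    calc (x : EReal) = (p : EReal) * ((p⁻¹ : ℝ) * (x : EReal) + ((-(p⁻¹ * c) : ℝ) : EReal)) + c := by
          norm_cast
          field_simp
          ring
      _ ≤ _ := by
        gcongr

lemma limsup_affine {α : Type*} {l : Filter α} {u v : α → ℝ} {p c : ℝ} (q : α → EReal)
    (hp : 0 < p) (hu : Tendsto u l (nhds p)) (hv : Tendsto v l (nhds c)) :
    limsup (fun y => (u y : EReal) * q y + (v y : EReal)) l =
      (p : EReal) * limsup q l + (c : EReal) := by
  have key := liminf_affine (-q) hp hu hv.neg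
  have h : (fun y => (u y : EReal) * (-q) y + ((-v y : ℝ) : EReal)) =
      -(fun y => (u y : EReal) * q y + (v y : EReal)) := by
    funext y
    simp only [Pi.neg_apply, EReal.coe_neg, mul_neg]
    rw [EReal.neg_add (Or.inr (EReal.coe_ne_top _)) (Or.inr (EReal.coe_ne_bot _)), sub_eq_add_neg]
  rw [h, EReal.liminf_neg, EReal.liminf_neg, mul_neg, EReal.coe_neg, ← sub_eq_add_neg,
    ← EReal.neg_add (Or.inr (EReal.coe_ne_top _)) (Or.inr (EReal.coe_ne_bot _))] at key
  exact neg_injective key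

/-- The difference quotient of a product, one factor being possibly infinite away from `t`. -/
lemma quotient_mul {x p c r : ℝ} (G : EReal) (hx : 0 < x) (hr : 0 < r) :
    ((x : EReal) * G - (p : EReal) * (c : EReal)) * (r : EReal) =
      (x : EReal) * ((G - (c : EReal)) * (r : EReal)) + (((x - p) * r * c : ℝ) : EReal) := by
  rw [← EReal.coe_mul]
  induction G with
  | bot =>
    rw [EReal.coe_mul_bot_of_pos hx, EReal.bot_sub, EReal.bot_sub, EReal.bot_mul_coe_of_pos hr,
      EReal.coe_mul_bot_of_pos hx, EReal.bot_add]
  | top =>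
    rw [EReal.coe_mul_top_of_pos hx, EReal.top_sub_coe, EReal.top_sub_coe,
      EReal.top_mul_coe_of_pos hr, EReal.coe_mul_top_of_pos hx, EReal.top_add_coe]
  | coe y =>
    norm_cast
    ring

lemma eventually_quotient_mul {t c : ℝ} {A : Set ℝ} {f : ℝ → ℝ} (g : ℝ → EReal)
    (hc : ContinuousAt f t) (hft : 0 < f t) (hg : g t = (c : EReal)) :
    (fun y => ((f y : EReal) * g y - (f t : EReal) * g t) * (((dist y t)⁻¹ : ℝ) : EReal))
      =ᶠ[nhdsWithin t (A \ {t})] fun y => (f y : EReal) *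
        ((g y - g t) * (((dist y t)⁻¹ : ℝ) : EReal)) +
          (((f y - f t) * (dist y t)⁻¹ * c : ℝ) : EReal) := by
  filter_upwards [self_mem_nhdsWithin,
    (hc.tendsto.mono_left nhdsWithin_le_nhds).eventually_const_lt hft] with y hy hfy
  rw [hg]
  exact quotient_mul (g y) hfy (inv_pos.2 (dist_pos.2 hy.2))

/-- The one-sided product rule; `d` is the derivative of `f` at `t` in the direction of `A`. -/
lemma rsd_mul {t c d : ℝ} {A : Set ℝ} {f : ℝ → ℝ} (g : ℝ → EReal)
    (hc : ContinuousAt f t) (hft : 0 < f t) (hg : g t = (c : EReal))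
    (hd : Tendsto (fun y => (f y - f t) * (dist y t)⁻¹) (nhdsWithin t (A \ {t})) (nhds d)) :
    rsd A (fun s => (f s : EReal) * g s) t = (f t : EReal) * rsd A g t + ((d * c : ℝ) : EReal) := by
  unfold rsd
  rw [liminf_congr (eventually_quotient_mul g hc hft hg)]
  exact liminf_affine _ hft (hc.tendsto.mono_left nhdsWithin_le_nhds) (hd.mul_const c)

lemma rsa_mul {t c d : ℝ} {A : Set ℝ} {f : ℝ → ℝ} (g : ℝ → EReal)
    (hc : ContinuousAt f t) (hft : 0 < f t) (hg : g t = (c : EReal))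
    (hd : Tendsto (fun y => (f y - f t) * (dist y t)⁻¹) (nhdsWithin t (A \ {t})) (nhds d)) :
    rsa A (fun s => (f s : EReal) * g s) t = (f t : EReal) * rsa A g t + ((d * c : ℝ) : EReal) := by
  unfold rsa
  rw [limsup_congr (eventually_quotient_mul g hc hft hg)]
  exact limsup_affine _ hft (hc.tendsto.mono_left nhdsWithin_le_nhds) (hd.mul_const c)

lemma nhdsWithin_split {a b t : ℝ} (ht : t ∈ Set.Ioo a b) :
    nhdsWithin t (Set.Ioo a b \ {t}) =
      nhdsWithin t (Set.Ico t b \ {t}) ⊔ nhdsWithin t (Set.Ioc a t \ {t}) := by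
  rw [← nhdsWithin_union]
  congr 1
  rw [← union_sdiff_distrib, union_comm, Ioc_union_Ico_eq_Ioo ht.1 ht.2]

lemma rsd_split {a b t : ℝ} (ht : t ∈ Set.Ioo a b) (g : ℝ → EReal) :
    rsd (Set.Ioo a b) g t = min (rsd (Set.Ico t b) g t) (rsd (Set.Ioc a t) g t) := by
  unfold rsd
  rw [nhdsWithin_split ht, liminf_sup_filter]

lemma rsa_split {a b t : ℝ} (ht : t ∈ Set.Ioo a b) (g : ℝ → EReal) :
    rsa (Set.Ioo a b) g t = max (rsa (Set.Ico t b) g t) (rsa (Set.Ioc a t) g t) := by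
  unfold rsa
  rw [nhdsWithin_split ht, limsup_sup_filter]

lemma tendsto_right {b t f' : ℝ} {f : ℝ → ℝ} (hf : HasDerivAt f f' t) :
    Tendsto (fun y => (f y - f t) * (dist y t)⁻¹) (nhdsWithin t (Set.Ico t b \ {t}))
      (nhds f') := by
  have h := (hasDerivAt_iff_tendsto_slope.1 hf).mono_left
    (nhdsWithin_mono t (fun y (hy : y ∈ Set.Ico t b \ {t}) => hy.2))
  refine h.congr' ?_
  filter_upwards [self_mem_nhdsWithin] with y hy
  rw [Real.dist_eq, abs_of_nonneg (sub_nonneg.2 hy.1.1), slope_def_field, div_eq_mul_inv]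

lemma tendsto_left {a t f' : ℝ} {f : ℝ → ℝ} (hf : HasDerivAt f f' t) :
    Tendsto (fun y => (f y - f t) * (dist y t)⁻¹) (nhdsWithin t (Set.Ioc a t \ {t}))
      (nhds (-f')) := by
  have h := ((hasDerivAt_iff_tendsto_slope.1 hf).mono_left
    (nhdsWithin_mono t (fun y (hy : y ∈ Set.Ioc a t \ {t}) => hy.2))).neg
  refine h.congr' ?_
  filter_upwards [self_mem_nhdsWithin] with y hy
  rw [Real.dist_eq, abs_of_nonpos (sub_nonpos.2 hy.1.2), slope_def_field, div_eq_mul_inv,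
    inv_neg, mul_neg]

/-- product rule for the rates of steepest descent/ascent of `f · g` on `(a,b)`.
All rates are computed in the metric space `(a,b)` (formalized as rates with respect to subsets
of `(a,b)` in `ℝ`, which agree with the intrinsic ones since `(a,b)` is open). -/
theorem product_rule_rates (a b : ℝ) (t : ℝ) (ht : t ∈ Set.Ioo a b)
    (f : ℝ → ℝ) (f' : ℝ) (hf : HasDerivAt f f' t) (hft : 0 < f t)
    (g : ℝ → EReal) (hgt : g t ≠ ⊤ ∧ g t ≠ ⊥) :
    rsd (Set.Ioo a b) (fun s => (f s : EReal) * g s) t =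
      min ((f t : EReal) * rsd (Set.Ico t b) g t + (f' : EReal) * g t)
          ((f t : EReal) * rsd (Set.Ioc a t) g t - (f' : EReal) * g t) ∧
    rsa (Set.Ioo a b) (fun s => (f s : EReal) * g s) t =
      max ((f t : EReal) * rsa (Set.Ico t b) g t + (f' : EReal) * g t)
          ((f t : EReal) * rsa (Set.Ioc a t) g t - (f' : EReal) * g t) ∧
    ((-(|f' * (g t).toReal|) : ℝ) : EReal) + (f t : EReal) * rsd (Set.Ioo a b) g t ≤
      rsd (Set.Ioo a b) (fun s => (f s : EReal) * g s) t ∧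
    rsa (Set.Ioo a b) (fun s => (f s : EReal) * g s) t ≤
      ((|f' * (g t).toReal| : ℝ) : EReal) + (f t : EReal) * rsa (Set.Ioo a b) g t := by
  lift g t to ℝ using hgt with c hg
  have hg := hg.symm
  have hc := hf.continuousAt
  have hp : (0 : EReal) ≤ (f t : EReal) := by exact_mod_cast hft.le
  have hneg : ∀ x : EReal, x - (f' : EReal) * (c : EReal) = x + ((-f' * c : ℝ) : EReal) := by
    intro x
    rw [sub_eq_add_neg, neg_mul, EReal.coe_neg, EReal.coe_mul]
  have hd : rsd (Set.Ioo a b) (fun s => (f s : EReal) * g s) t =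
      min ((f t : EReal) * rsd (Set.Ico t b) g t + ((f' * c : ℝ) : EReal))
        ((f t : EReal) * rsd (Set.Ioc a t) g t + ((-f' * c : ℝ) : EReal)) := by
    rw [rsd_split ht, rsd_mul g hc hft hg (tendsto_right hf), rsd_mul g hc hft hg (tendsto_left hf)]
  have hu : rsa (Set.Ioo a b) (fun s => (f s : EReal) * g s) t =
      max ((f t : EReal) * rsa (Set.Ico t b) g t + ((f' * c : ℝ) : EReal))
        ((f t : EReal) * rsa (Set.Ioc a t) g t + ((-f' * c : ℝ) : EReal)) := by
    rw [rsa_split ht, rsa_mul g hc hft hg (tendsto_right hf), rsa_mul g hc hft hg (tendsto_left hf)]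
  refine ⟨?_, ?_, ?_, ?_⟩
  · rw [hd, hneg, EReal.coe_mul]
  · rw [hu, hneg, EReal.coe_mul]
  · rw [hd, EReal.toReal_coe, rsd_split ht, add_comm]
    refine le_min (add_le_add (mul_le_mul_of_nonneg_left (min_le_left _ _) hp) ?_)
      (add_le_add (mul_le_mul_of_nonneg_left (min_le_right _ _) hp) ?_)
    · exact EReal.coe_le_coe_iff.2 (neg_abs_le _)
    · rw [neg_mul]
      exact EReal.coe_le_coe_iff.2 (neg_le_neg (le_abs_self _))
  · rw [hu, EReal.toReal_coe, rsa_split ht, add_comm ((|f' * c| : ℝ) : EReal)]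
    refine max_le (add_le_add (mul_le_mul_of_nonneg_left (le_max_left _ _) hp) ?_)
      (add_le_add (mul_le_mul_of_nonneg_left (le_max_right _ _) hp) ?_)
    · exact EReal.coe_le_coe_iff.2 (le_abs_self _)
    · rw [neg_mul]
      exact EReal.coe_le_coe_iff.2 (neg_le_abs _)
end

section
/- Let X be a metric space, A ⊆ X a nonempty set, f : [0, +∞] → [0, +∞] a non-decreasing function, and g : X → [0, +∞] a function. Let x ∈ A satisfy g(x) finite, g(x) > 0, and suppose f is continuously differentiable at g(x) with f'(g(x)) > 0. If −∞ < g^↓_A(x) < 0, then the composition f ∘ g satisfies (f∘g)^↓_A(x) = f'(g(x)) · g^↓_A(x) < 0. Similarly, if 0 < g^↑_A(x) < +∞, then (f∘g)^↑_A(x) = f'(g(x)) · g^↑_A(x) > 0. -/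
/-!
Write `a = g x`, `c = f'(a) > 0`, and let `q` and `Q` be the difference quotients of `g` and `f ∘ g`
at `x`. For the descent rate only the points with `g y < a` matter: where `g y ≥ a`, monotonicity
gives `q, Q ≥ 0`, while both liminfs are to be negative. Since the liminf of `q` is finite, `q` is
bounded below near `x`, hence `g y > a - O(dist y x)`. So at the relevant points `g y → a`, and
differentiability of `f` at `a` gives `Q = s * q` with `s → c` (`eventually_slope_bounds`).
Comparing real thresholds yields `liminf Q = c * liminf q` (`rsd_comp`).

The ascent rate reduces to the descent rate of `-g` and `t ↦ -f (-t)`, because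
`rsa A g x = -rsd A (-g) x` when `g x` is finite (`rsa_eq_neg_rsd_neg`). For this reason the descent
lemmas are stated for `f` monotone on an arbitrary set `S` containing the values of `g`.
-/

open Filter Set Metric

theorem eventually_inv_dist_pos {X : Type*} [MetricSpace X] (A : Set X) (x : X) :
    ∀ᶠ y in nhdsWithin x (A \ {x}), 0 < (dist y x)⁻¹ := by
  filter_upwards [self_mem_nhdsWithin] with y hy
  exact inv_pos.mpr (dist_pos.mpr hy.2)

/-- If the difference quotients of `g` at `x` are bounded below near `x`, then the points near `x`
where `g` decreases have values close to `g x = a`; there the increment of `f` lies between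
`K` and `k` times the increment of `g`, for any `k < f'(a) < K`. -/
theorem eventually_slope_bounds {X : Type*} [MetricSpace X] {A : Set X} {f : EReal → EReal}
    {g : X → EReal} {x : X} {a c : ℝ} {fr : ℝ → ℝ} (hga : g x = (a : EReal))
    (hfr : ∀ᶠ t : ℝ in nhds a, f (t : EReal) = (fr t : EReal)) (hder : HasDerivAt fr c a)
    {m k K : ℝ} (hk : k < c) (hK : c < K)
    (hm : ∀ᶠ y in nhdsWithin x (A \ {x}),
      (m : EReal) < (g y - g x) * (((dist y x)⁻¹ : ℝ) : EReal)) :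
    ∀ᶠ y in nhdsWithin x (A \ {x}), g y < g x →
      ∃ t : ℝ, g y = t ∧ t < a ∧ f (g y) = (fr t : EReal) ∧
        K * (t - a) ≤ fr t - fr a ∧ fr t - fr a ≤ k * (t - a) := by
  have hslope := hasDerivAt_iff_tendsto_slope.mp hder
  have hev : ∀ᶠ t : ℝ in nhds a, t < a →
      f (t : EReal) = (fr t : EReal) ∧
        K * (t - a) ≤ fr t - fr a ∧ fr t - fr a ≤ k * (t - a) := by
    have h1 := eventually_nhdsWithin_iff.mp (hslope.eventually (Ioo_mem_nhds hk hK))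
    filter_upwards [h1, hfr] with t ht hft hta
    have hs := ht (ne_of_lt hta)
    rw [slope_def_field] at hs
    have hneg : t - a < 0 := sub_neg.mpr hta
    exact ⟨hft, ((div_lt_iff_of_neg hneg).mp hs.2).le, ((lt_div_iff_of_neg hneg).mp hs.1).le⟩
  obtain ⟨δ, hδ, hball⟩ := Metric.eventually_nhds_iff.mp hev
  -- `q > m` gives `g y - a > m * dist y x`, which exceeds `-δ` once `dist y x` is small.
  have hsmall : ∀ᶠ y in nhdsWithin x (A \ {x}), -δ < m * dist y x := by
    have : Tendsto (fun y => m * dist y x) (nhds x) (nhds (m * dist x x)) :=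
      (continuous_const.mul (continuous_id.dist continuous_const)).tendsto x
    rw [dist_self, mul_zero] at this
    exact nhdsWithin_le_nhds (this.eventually (lt_mem_nhds (neg_lt_zero.mpr hδ)))
  filter_upwards [hm, hsmall, eventually_inv_dist_pos A x] with y hq hd hr hlt
  rw [hga] at hq hlt
  have hbot : g y ≠ ⊥ := by
    intro hb
    rw [hb, EReal.bot_sub, EReal.bot_mul_coe_of_pos hr] at hq
    exact not_lt_bot hq
  lift g y to ℝ using ⟨hlt.ne_top, hbot⟩ with t ht
  have hta : t < a := EReal.coe_lt_coe_iff.mp hlt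
  have hq' : m < (t - a) * (dist y x)⁻¹ := by exact_mod_cast hq
  have hq2 : m * dist y x < t - a := by
    rwa [← div_eq_mul_inv, lt_div_iff₀ (inv_pos.mp hr)] at hq'
  have hdist : dist t a < δ := by
    rw [Real.dist_eq, abs_lt]
    constructor <;> linarith
  exact ⟨t, rfl, hta, hball hdist hta⟩

/-- The chain rule for the descent rate. Monotonicity of `f` serves only to keep the quotient of
`f ∘ g` nonnegative where `g y ≥ g x`, including points where `g y` is far from `g x` or infinite;
elsewhere `eventually_slope_bounds` applies. -/
theorem rsd_comp {X : Type*} [MetricSpace X] {A : Set X} {S : Set EReal} {f : EReal → EReal}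
    {g : X → EReal} {x : X} {a c : ℝ} {fr : ℝ → ℝ} (hgS : ∀ y, g y ∈ S) (hf : MonotoneOn f S)
    (hga : g x = (a : EReal))
    (hfr : ∀ᶠ t : ℝ in nhds a, f (t : EReal) = (fr t : EReal)) (hder : HasDerivAt fr c a)
    (hc : 0 < c) (hbot : ⊥ < rsd A g x) (hneg : rsd A g x < 0) :
    rsd A (fun y => f (g y)) x = (c : EReal) * rsd A g x ∧ rsd A (fun y => f (g y)) x < 0 := by
  obtain ⟨l, hl⟩ : ∃ l : ℝ, rsd A g x = l := by
    lift rsd A g x to ℝ using ⟨(hneg.trans_le le_top).ne, hbot.ne'⟩ with l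
    exact ⟨l, rfl⟩
  have hl0 : l < 0 := by rw [hl] at hneg; exact_mod_cast hneg
  have hcl : c * l < 0 := mul_neg_of_pos_of_neg hc hl0
  have hfa : f (g x) = (fr a : EReal) := by rw [hga]; exact hfr.self_of_nhds
  have hlow : ∀ m : ℝ, m < l → ∀ᶠ y in nhdsWithin x (A \ {x}),
      (m : EReal) < (g y - g x) * (((dist y x)⁻¹ : ℝ) : EReal) := by
    intro m hm
    refine eventually_lt_of_lt_liminf ?_ (by isBoundedDefault)
    change (m : EReal) < rsd A g x
    rw [hl]
    exact_mod_cast hm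
  have key : rsd A (fun y => f (g y)) x = ((c * l : ℝ) : EReal) := by
    apply le_antisymm
    · rw [← EReal.le_of_forall_lt_iff_le]
      intro m₁ hm₁
      have hm₁' : c * l < m₁ := by exact_mod_cast hm₁
      -- It suffices to treat negative thresholds.
      obtain ⟨m, hmm, hml, hm0⟩ : ∃ m : ℝ, m ≤ m₁ ∧ c * l < m ∧ m < 0 :=
        ⟨min m₁ (c * l / 2), min_le_left _ _, lt_min hm₁' (by linarith),
          (min_le_right _ _).trans_lt (by linarith)⟩
      obtain ⟨m', hlm', hm'⟩ : ∃ m', l < m' ∧ m' < m / c :=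
        exists_between ((lt_div_iff₀ hc).mpr (by linarith))
      have hm'0 : m' < 0 := hm'.trans (div_neg_of_neg_of_pos hm0 hc)
      have hcm : c * m' < m := by rw [lt_div_iff₀ hc] at hm'; linarith
      have hk0 : 0 < m / m' := div_pos_of_neg_of_neg hm0 hm'0
      have hkc : m / m' < c := (div_lt_iff_of_neg hm'0).mpr hcm
      have hfreq : ∃ᶠ y in nhdsWithin x (A \ {x}),
          (g y - g x) * (((dist y x)⁻¹ : ℝ) : EReal) < (m' : EReal) := by
        apply frequently_lt_of_liminf_lt
        · isBoundedDefault
        change rsd A g x < (m' : EReal)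
        rw [hl]
        exact_mod_cast hlm'
      refine le_trans (liminf_le_of_frequently_le' ?_) (EReal.coe_le_coe_iff.mpr hmm)
      refine (hfreq.and_eventually ((eventually_slope_bounds hga hfr hder hkc (lt_add_one c)
        (hlow (l - 1) (by linarith))).and (eventually_inv_dist_pos A x))).mono ?_
      rintro y ⟨hq, hb, hr⟩
      have hlt : g y < g x := by
        by_contra! hge
        have h0 : 0 ≤ (g y - g x) * (((dist y x)⁻¹ : ℝ) : EReal) :=
          mul_nonneg (EReal.sub_nonneg (by simp [hga]) (by simp [hga]) |>.mpr hge)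
            (by exact_mod_cast hr.le)
        have h1 : (0 : EReal) < (m' : EReal) := h0.trans_lt hq
        have h2 : 0 < m' := by exact_mod_cast h1
        linarith
      obtain ⟨t, hgt, -, hft, -, hup⟩ := hb hlt
      rw [hgt, hga] at hq
      have hq' : (t - a) * (dist y x)⁻¹ < m' := by exact_mod_cast hq
      have : (fr t - fr a) * (dist y x)⁻¹ ≤ m := calc
        _ ≤ (m / m' * (t - a)) * (dist y x)⁻¹ := mul_le_mul_of_nonneg_right hup hr.le
        _ = m / m' * ((t - a) * (dist y x)⁻¹) := by ring
        _ ≤ m / m' * m' := mul_le_mul_of_nonneg_left hq'.le hk0.le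
        _ = m := div_mul_cancel₀ _ hm'0.ne
      simp only [hft, hfa]
      exact_mod_cast this
    · rw [← EReal.ge_of_forall_gt_iff_ge]
      intro m hm
      have hmc : m < c * l := by exact_mod_cast hm
      obtain ⟨m', hm', hlm'⟩ : ∃ m', m / c < m' ∧ m' < l :=
        exists_between ((div_lt_iff₀ hc).mpr (by linarith))
      have hm'0 : m' < 0 := hlm'.trans hl0
      have hcm : m < c * m' := by rw [div_lt_iff₀ hc] at hm'; linarith
      have hKc : c < m / m' := (lt_div_iff_of_neg hm'0).mpr hcm
      apply le_liminf_of_le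
      · isBoundedDefault
      filter_upwards [hlow m' hlm', eventually_inv_dist_pos A x,
        eventually_slope_bounds hga hfr hder (sub_one_lt c) hKc (hlow m' hlm')] with y hq hr hb
      rcases lt_or_ge (g y) (g x) with hlt | hge
      · obtain ⟨t, hgt, -, hft, hlo, -⟩ := hb hlt
        rw [hgt, hga] at hq
        have hq' : m' < (t - a) * (dist y x)⁻¹ := by exact_mod_cast hq
        have : m ≤ (fr t - fr a) * (dist y x)⁻¹ := calc
          m = m / m' * m' := (div_mul_cancel₀ _ hm'0.ne).symm
          _ ≤ m / m' * ((t - a) * (dist y x)⁻¹) :=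
            mul_le_mul_of_nonneg_left hq'.le (hc.trans hKc).le
          _ = (m / m' * (t - a)) * (dist y x)⁻¹ := by ring
          _ ≤ _ := mul_le_mul_of_nonneg_right hlo hr.le
        simp only [hft, hfa]
        exact_mod_cast this
      · have h0 : 0 ≤ (f (g y) - f (g x)) * (((dist y x)⁻¹ : ℝ) : EReal) :=
          mul_nonneg (EReal.sub_nonneg (by simp [hfa]) (by simp [hfa]) |>.mpr
            (hf (hgS x) (hgS y) hge)) (by exact_mod_cast hr.le)
        have h1 : (m : EReal) ≤ 0 := by exact_mod_cast (hmc.trans hcl).le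
        exact h1.trans h0
  rw [key, hl]
  exact ⟨EReal.coe_mul c l, by exact_mod_cast hcl⟩

theorem rsa_eq_neg_rsd_neg {X : Type*} [MetricSpace X] (A : Set X) (g : X → EReal) (x : X) {a : ℝ}
    (hga : g x = (a : EReal)) : rsa A g x = -rsd A (fun y => -g y) x := by
  have h : (fun y => (-g y - -g x) * (((dist y x)⁻¹ : ℝ) : EReal)) =
      -(fun y => (g y - g x) * (((dist y x)⁻¹ : ℝ) : EReal)) := by
    funext y
    rw [Pi.neg_apply, ← EReal.neg_mul, EReal.neg_sub (by simp [hga]) (by simp [hga]),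
      sub_eq_add_neg (-g y), neg_neg]
  unfold rsa rsd
  rw [h, EReal.liminf_neg, neg_neg]

/-- chain rule for rates of steepest descent/ascent.  The function
`f : [0,+∞] → [0,+∞]` is modelled as a monotone, nonnegative function `f : EReal → EReal`
on `[0,+∞]`, represented near the (finite, positive) value `g x` by a real function `fr`
that is differentiable in a neighbourhood of `(g x).toReal` with derivative continuous at
`(g x).toReal`; this encodes continuous differentiability of `f` at `g x`. -/
theorem chain_rule_rates {X : Type*} [MetricSpace X] (A : Set X) (hA : A.Nonempty)
    (f : EReal → EReal) (g : X → EReal) (x : X) (hx : x ∈ A)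
    (hg_nonneg : ∀ y, 0 ≤ g y)
    (hf_mono : MonotoneOn f (Set.Ici (0 : EReal)))
    (hf_nonneg : ∀ t : EReal, 0 ≤ t → 0 ≤ f t)
    (hgx_fin : g x ≠ ⊤) (hgx_pos : 0 < g x)
    (fr : ℝ → ℝ)
    (hfr : ∀ᶠ (t : ℝ) in nhds (g x).toReal, f ((t : ℝ) : EReal) = ((fr t : ℝ) : EReal))
    (hdiff : ∀ᶠ t in nhds (g x).toReal, DifferentiableAt ℝ fr t)
    (hcont : ContinuousAt (deriv fr) (g x).toReal)
    (hder_pos : 0 < deriv fr (g x).toReal) :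
    ((⊥ < rsd A g x ∧ rsd A g x < 0) →
      rsd A (fun y => f (g y)) x = ((deriv fr (g x).toReal : ℝ) : EReal) * rsd A g x ∧
      rsd A (fun y => f (g y)) x < 0) ∧
    ((0 < rsa A g x ∧ rsa A g x < ⊤) →
      rsa A (fun y => f (g y)) x = ((deriv fr (g x).toReal : ℝ) : EReal) * rsa A g x ∧
      0 < rsa A (fun y => f (g y)) x) := by
  obtain ⟨a, hga⟩ : ∃ a : ℝ, g x = (a : EReal) :=
    ⟨(g x).toReal, (EReal.coe_toReal hgx_fin (EReal.bot_lt_zero.trans hgx_pos).ne').symm⟩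
  rw [hga, EReal.toReal_coe] at hfr hdiff hcont hder_pos ⊢
  have hder : HasDerivAt fr (deriv fr a) a := hdiff.self_of_nhds.hasDerivAt
  refine ⟨fun ⟨hb, hn⟩ => rsd_comp hg_nonneg hf_mono hga hfr hder hder_pos hb hn, ?_⟩
  rintro ⟨hp, ht⟩
  have hfa : f (g x) = (fr a : EReal) := by rw [hga]; exact hfr.self_of_nhds
  rw [rsa_eq_neg_rsd_neg A g x hga] at hp ht ⊢
  rw [rsa_eq_neg_rsd_neg A (fun y => f (g y)) x hfa]
  have hmono : MonotoneOn (fun t => -f (-t)) (Iic (0 : EReal)) := by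
    intro s hs t ht hst
    exact EReal.neg_le_neg_iff.mpr
      (hf_mono (EReal.le_neg_of_le_neg (by simpa using ht))
        (EReal.le_neg_of_le_neg (by simpa using hs)) (EReal.neg_le_neg_iff.mpr hst))
  have hga' : -g x = ((-a : ℝ) : EReal) := by rw [hga, EReal.coe_neg]
  have hfr' : ∀ᶠ t : ℝ in nhds (-a), -f (-(t : EReal)) = ((-fr (-t) : ℝ) : EReal) := by
    have hn : Tendsto (fun t : ℝ => -t) (nhds (-a)) (nhds a) := by
      simpa using (continuous_neg (G := ℝ)).tendsto (-a)
    filter_upwards [hn.eventually hfr] with t ht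
    rw [EReal.coe_neg] at ht
    rw [ht, EReal.coe_neg]
  have hder' : HasDerivAt (fun t => -fr (-t)) (deriv fr a) (-a) := by
    have h1 : HasDerivAt fr (deriv fr a) (-(-a)) := by rwa [neg_neg]
    have h2 := (HasDerivAt.comp (-a) h1 (hasDerivAt_neg (-a))).neg
    rwa [mul_neg_one, neg_neg] at h2
  have hb : ⊥ < rsd A (fun y => -g y) x := by
    rw [bot_lt_iff_ne_bot]
    intro h
    simp [h] at ht
  have hn : rsd A (fun y => -g y) x < 0 := by
    simpa using EReal.neg_lt_neg_iff.mpr hp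
  obtain ⟨h1, h2⟩ := rsd_comp (S := Iic 0) (g := fun y => -g y)
    (f := fun t => -f (-t)) (fr := fun t => -fr (-t))
    (fun y => by simpa using EReal.neg_le_neg_iff.mpr (hg_nonneg y)) hmono hga' hfr' hder'
    hder_pos hb hn
  simp only [neg_neg] at h1 h2
  refine ⟨?_, ?_⟩
  · rw [h1, mul_comm, ← EReal.neg_mul, mul_comm]
  · simpa using EReal.neg_lt_neg_iff.mpr h2
end

section
/- Let X and Y be normed spaces, A_X ⊆ X and A_Y ⊆ Y nonempty sets, and A = A_X × A_Y, where X × Y is equipped with the metric d((x₁,y₁),(x₂,y₂)) = ‖x₁ − x₂‖_X + ‖y₁ − y₂‖_Y. Let U_x ⊆ X be a neighbourhood of a point x ∈ A_X, U_y ⊆ Y a neighbourhood of a point y ∈ A_Y, f : U_x × U_y → ℝ Fréchet differentiable at (x,y), and g : U_x → ℝ, h : U_y → ℝ given functions. Then the function F(u,v) = f(u,v) + g(u) + h(v) is defined in a neighbourhood of (x,y) and F^↓_A(x,y) ≥ 2 · min{ 0, f(·,y)^↓_{A_X}(x) + g^↓_{A_X}(x), f(x,·)^↓_{A_Y}(y)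 + h^↓_{A_Y}(y) }. -/
/-!
The claim holds even without the factor `2`, which is harmless because the minimum `m` is
nonpositive. Liminf is superadditive, so any real `r < m` satisfies
`r * ‖u - x‖ ≤ (f (u, y) - f (x, y)) + (g u - g x)` for `u ∈ AX` near `x`, and likewise in the
second variable (`rsd_add_eventually`). Fréchet differentiability makes `f` additively separable
to first order: `f (u, v) - f (x, y)` is `(f (u, y) - f (x, y)) + (f (x, v) - f (x, y))` up to
`ε * (‖u - x‖ + ‖v - y‖)`; only the lower bound is needed (`separable_first_order`). Adding the two one-variable estimates bounds
the increment of the sum function below by `(r - ε) * (‖u - x‖ + ‖v - y‖)`.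
-/

open Filter Set Metric

/-- The rate of steepest descent of `F` with respect to a set `A` of pairs at the point `z`,
where the product space carries the sum metric
`d((x₁,y₁),(x₂,y₂)) = d(x₁,x₂) + d(y₁,y₂)` (whose topology is the product topology). -/
noncomputable def rsdPair {X Y : Type*} [MetricSpace X] [MetricSpace Y]
    (A : Set (X × Y)) (F : X × Y → EReal) (z : X × Y) : EReal :=
  Filter.liminf
    (fun w => (F w - F z) * (((dist w.1 z.1 + dist w.2 z.2)⁻¹ : ℝ) : EReal))
    (nhdsWithin z (A \ {z}))

/-- A real number below the sum of two rates of steepest descent is a lower slope for the sum of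
the functions. The point `x` itself need not be excluded, since both sides vanish there. -/
theorem rsd_add_eventually {Z : Type*} [MetricSpace Z] {A : Set Z} {p q : Z → ℝ} {x : Z} {c : ℝ}
    (hc : (c : EReal) < rsd A (fun u => ((p u : ℝ) : EReal)) x
      + rsd A (fun u => ((q u : ℝ) : EReal)) x) :
    ∀ᶠ u in nhdsWithin x A, c * dist u x ≤ (p u - p x) + (q u - q x) := by
  have h1 := eventually_lt_of_lt_liminf (lt_of_lt_of_le hc EReal.le_liminf_add)
  rw [eventually_nhdsWithin_iff] at h1 ⊢
  filter_upwards [h1] with u hu huA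
  by_cases hux : u = x
  · subst hux; simp
  have h2 := hu ⟨huA, hux⟩
  have hd : 0 < dist u x := dist_pos.mpr hux
  simp only [Pi.add_apply, ← EReal.coe_sub, ← EReal.coe_mul, ← EReal.coe_add,
    EReal.coe_lt_coe_iff, ← div_eq_mul_inv, ← add_div] at h2
  exact ((lt_div_iff₀ hd).1 h2).le

/-- First-order separability, as a lower bound: in the expansions of `f` at `w`, `(w.1, y)` and
`(x, w.2)` around `(x, y)` the linear parts cancel, leaving three remainders of at most `ε / 2`
times the respective distances. -/
theorem separable_first_order {X Y : Type*}
    [NormedAddCommGroup X] [NormedSpace ℝ X] [NormedAddCommGroup Y] [NormedSpace ℝ Y]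
    {x : X} {y : Y} {f : X × Y → ℝ} (hf : DifferentiableAt ℝ f (x, y)) {ε : ℝ} (hε : 0 < ε) :
    ∀ᶠ w in nhds (x, y), (f (w.1, y) - f (x, y)) + (f (x, w.2) - f (x, y))
      - ε * (dist w.1 x + dist w.2 y) ≤ f w - f (x, y) := by
  obtain ⟨f', hf'⟩ := hf
  have h0 := hf'.isLittleO.def (half_pos hε)
  have t1 : Tendsto (fun w : X × Y => (w.1, y)) (nhds (x, y)) (nhds (x, y)) :=
    (by fun_prop : Continuous (fun w : X × Y => (w.1, y))).tendsto (x, y)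
  have t2 : Tendsto (fun w : X × Y => (x, w.2)) (nhds (x, y)) (nhds (x, y)) :=
    (by fun_prop : Continuous (fun w : X × Y => (x, w.2))).tendsto (x, y)
  filter_upwards [h0, t1.eventually h0, t2.eventually h0] with w a b c
  have hlin : f' (w - (x, y)) = f' ((w.1, y) - (x, y)) + f' ((x, w.2) - (x, y)) := by
    rw [← map_add]; congr 1; ext <;> simp
  have n0 : ‖w - (x, y)‖ ≤ dist w.1 x + dist w.2 y := by
    rw [Prod.norm_def, dist_eq_norm, dist_eq_norm]
    exact max_le_add_of_nonneg (norm_nonneg _) (norm_nonneg _)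
  have n1 : ‖(w.1, y) - (x, y)‖ = dist w.1 x := by simp [Prod.norm_def, dist_eq_norm]
  have n2 : ‖(x, w.2) - (x, y)‖ = dist w.2 y := by simp [Prod.norm_def, dist_eq_norm]
  rw [n1] at b
  rw [n2] at c
  have a' := (abs_le.1 a).1
  have b' := (abs_le.1 b).2
  have c' := (abs_le.1 c).2
  have n0' := mul_le_mul_of_nonneg_left n0 (half_pos hε).le
  linarith

/-- lower estimate of the rate of steepest descent on a product via the
"partial" rates of steepest descent. -/
theorem rsd_prod_lower_estimate {X Y : Type*}
    [NormedAddCommGroup X] [NormedSpace ℝ X] [NormedAddCommGroup Y] [NormedSpace ℝ Y]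
    (AX : Set X) (AY : Set Y) (hAX : AX.Nonempty) (hAY : AY.Nonempty)
    (x : X) (y : Y) (hx : x ∈ AX) (hy : y ∈ AY)
    (f : X × Y → ℝ) (hf : DifferentiableAt ℝ f (x, y))
    (g : X → ℝ) (h : Y → ℝ) :
    (2 : EReal) * min 0 (min
        (rsd AX (fun u => ((f (u, y) : ℝ) : EReal)) x
          + rsd AX (fun u => ((g u : ℝ) : EReal)) x)
        (rsd AY (fun v => ((f (x, v) : ℝ) : EReal)) y
          + rsd AY (fun v => ((h v : ℝ) : EReal)) y))
      ≤ rsdPair (AX ×ˢ AY) (fun w => ((f w + g w.1 + h w.2 : ℝ) : EReal)) (x, y) := by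
  have two_mul_le : ∀ m : EReal, m ≤ 0 → 2 * m ≤ m := by
    intro m hm
    calc 2 * m ≤ 1 * m := EReal.mul_le_mul_of_nonpos_right (by norm_num) hm
      _ = m := one_mul m
  refine (two_mul_le _ (min_le_left _ _)).trans (le_of_forall_lt fun b hb => ?_)
  obtain ⟨c, hbc, hc⟩ := EReal.lt_iff_exists_real_btwn.1 hb
  obtain ⟨r, hcr, hr⟩ := EReal.lt_iff_exists_real_btwn.1 hc
  refine hbc.trans_le (le_liminf_of_le (by isBoundedDefault) ?_)
  -- The gap between `c` and `r` absorbs the first-order error of `separable_first_order`.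
  have hε : 0 < r - c := sub_pos.2 (EReal.coe_lt_coe_iff.1 hcr)
  obtain ⟨-, hr⟩ := lt_min_iff.1 hr
  obtain ⟨hcx, hcy⟩ := lt_min_iff.1 hr
  have ex := rsd_add_eventually (p := fun u => f (u, y)) hcx
  have ey := rsd_add_eventually (p := fun v => f (x, v)) hcy
  have exy := ex.prod_mk ey
  rw [← nhdsWithin_prod_eq] at exy
  filter_upwards [nhdsWithin_mono _ sdiff_subset exy,
    nhdsWithin_le_nhds (separable_first_order hf hε), self_mem_nhdsWithin] with w hw hs hwA
  obtain ⟨hwx, hwy⟩ := hw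
  have hd : 0 < dist w.1 x + dist w.2 y := by
    rcases eq_or_ne w.1 x with e1 | e1
    · have e2 : w.2 ≠ y := fun e2 => hwA.2 (Prod.ext e1 e2)
      exact add_pos_of_nonneg_of_pos dist_nonneg (dist_pos.2 e2)
    · exact add_pos_of_pos_of_nonneg (dist_pos.2 e1) dist_nonneg
  rw [← EReal.coe_sub, ← EReal.coe_mul, EReal.coe_le_coe_iff, ← div_eq_mul_inv, le_div_iff₀ hd]
  linarith
end

section
/- Suppose the parametric penalty function F_λ is bounded below on A × P for some λ ≥ 0. Then sup_{λ ≥ 0} inf_{(x,p) ∈ A×P} F_λ(x,p) = lim_{η → 0+} β(η). -/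
/-!
Both inequalities compare the two suprema through real numbers lying below them.

If a real `c` bounds `F_λ` from below on `A × P`, a point `x` feasible for `β(η)` admits some `p`
with `φ(x,p) < 2η`, so `f(x) ≥ c - 2λη`; as `η → 0+` the loss vanishes
(`real_le_sup_pertFun`).

Conversely, let `c < β(η)`. Where `φ(x,p) ≤ η`, the point `x` is feasible for `β(η)`, so
`F_λ ≥ f(x) ≥ c` for every `λ ≥ 0`. Where `φ(x,p) > η`, raising `λ` from a value `λ₀` at which
the penalty function is bounded below to `λ₀ + δ` adds at least `δη`, which lifts the lower bound
above `c` once `δ` is large (`exists_le_penFun`).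
-/

open Filter Set Metric

/-- The parametric penalty function `F_λ(x,p) = f(x) + λ φ(x,p)`. -/
noncomputable def penFun {X P : Type*} (f : X → EReal) (φ : X → P → EReal)
    (lam : ℝ) (x : X) (p : P) : EReal :=
  f x + (lam : EReal) * φ x p

/-- The perturbation function `β(η) = inf { f(x) : x ∈ A, inf_{p ∈ P} φ(x,p) ≤ η }`. -/
noncomputable def pertFun {X P : Type*} (A : Set X) (f : X → EReal)
    (φ : X → P → EReal) (η : ℝ) : EReal :=
  ⨅ x ∈ {x ∈ A | (⨅ p : P, φ x p) ≤ (η : EReal)}, f x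

/-- A real strictly below a lower bound `c` of `F_λ` is at most `β(η)` for some small `η > 0`, hence
at most the supremum. -/
lemma real_le_sup_pertFun {X P : Type*} (A : Set X) (f : X → EReal) (hf : ∀ x, f x ≠ ⊥)
    (φ : X → P → EReal) {lam c c' : ℝ} (hlam : 0 ≤ lam) (hc : c' < c)
    (h : ∀ x ∈ A, ∀ p : P, (c : EReal) ≤ penFun f φ lam x p) :
    (c' : EReal) ≤ ⨆ η : ℝ, ⨆ _ : (0 : ℝ) < η, pertFun A f φ η := by
  -- `η` is chosen so that `2λη ≤ c - c'`; the `+ 1` covers `λ = 0`.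
  set η : ℝ := (c - c') / (2 * (lam + 1)) with hη
  have hη0 : 0 < η := div_pos (by linarith) (by linarith)
  have hηc : lam * (2 * η) ≤ c - c' := by
    have : (lam + 1) * (2 * η) = c - c' := by rw [hη]; field_simp
    nlinarith
  refine le_trans ?_ (le_iSup₂ (f := fun (η : ℝ) (_ : 0 < η) => pertFun A f φ η) η hη0)
  refine le_iInf₂ fun x hx => ?_
  obtain ⟨hxA, hxη⟩ := hx
  have hlt : (⨅ p : P, φ x p) < ((2 * η : ℝ) : EReal) :=
    hxη.trans_lt (by exact_mod_cast (by linarith : η < 2 * η))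
  obtain ⟨p, hp⟩ := iInf_lt_iff.mp hlt
  have hle : (c : EReal) ≤ f x + ((lam * (2 * η) : ℝ) : EReal) := by
    refine (h x hxA p).trans ?_
    unfold penFun
    rw [EReal.coe_mul]
    gcongr
  have hfx := hf x
  generalize f x = y at hle hfx
  induction y using EReal.rec with
  | bot => exact absurd rfl hfx
  | top => exact le_top
  | coe r =>
    have hle' : c ≤ r + lam * (2 * η) := by exact_mod_cast hle
    exact_mod_cast (by linarith : c' ≤ r)

/-- The penalty function becomes exact up to level `β(η)`: each real
not exceeding `β(η)` is a lower bound of `F_λ` on `A × P` for some `λ ≥ 0`. -/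
lemma exists_le_penFun {X P : Type*} (A : Set X) (f : X → EReal)
    (φ : X → P → EReal) (hφ : ∀ x p, 0 ≤ φ x p)
    (hbdd : ∃ lam : ℝ, 0 ≤ lam ∧ ∃ c : ℝ, ∀ x ∈ A, ∀ p : P,
      (c : EReal) ≤ penFun f φ lam x p)
    {c η : ℝ} (hη : 0 < η) (hc : (c : EReal) ≤ pertFun A f φ η) :
    ∃ lam : ℝ, 0 ≤ lam ∧ ∀ x ∈ A, ∀ p : P, (c : EReal) ≤ penFun f φ lam x p := by
  obtain ⟨l0, hl0, c0, h0⟩ := hbdd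
  -- `δη ≥ c - c₀` is exactly what lifts the lower bound `c₀` to `c` where `φ > η`.
  set δ : ℝ := max 0 (c - c0) / η with hδ
  have hδ0 : 0 ≤ δ := by positivity
  have hδη : c - c0 ≤ δ * η := by
    rw [hδ, div_mul_cancel₀ _ hη.ne']; exact le_max_right _ _
  refine ⟨l0 + δ, by positivity, fun x hx p => ?_⟩
  rcases le_or_gt (φ x p) (η : EReal) with hp | hp
  · have hfx : (c : EReal) ≤ f x :=
      hc.trans (iInf₂_le x ⟨hx, (iInf_le _ p).trans hp⟩)
    refine hfx.trans (le_add_of_nonneg_right ?_)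
    exact mul_nonneg (by exact_mod_cast add_nonneg hl0 hδ0) (hφ x p)
  · have hsplit : penFun f φ (l0 + δ) x p = penFun f φ l0 x p + (δ : EReal) * φ x p := by
      unfold penFun
      rw [EReal.coe_add, EReal.right_distrib_of_nonneg (by exact_mod_cast hl0)
        (by exact_mod_cast hδ0), add_assoc]
    have hmul : ((δ * η : ℝ) : EReal) ≤ (δ : EReal) * φ x p := by
      rw [EReal.coe_mul]
      exact mul_le_mul_of_nonneg_left hp.le (by exact_mod_cast hδ0)
    rw [hsplit]
    calc (c : EReal) ≤ ((c0 + δ * η : ℝ) : EReal) := by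
          exact_mod_cast (by linarith : c ≤ c0 + δ * η)
      _ = (c0 : EReal) + ((δ * η : ℝ) : EReal) := EReal.coe_add _ _
      _ ≤ _ := add_le_add (h0 x hx p) hmul

/-- `sup_{λ ≥ 0} inf_{(x,p) ∈ A×P} F_λ(x,p) = lim_{η → 0+} β(η)`.
Since `β` is non-increasing, the right-hand limit at `0` equals `sup_{η > 0} β(η)`. -/
theorem sup_inf_penalty_eq_limit_perturbation {X P : Type*} [MetricSpace X] [MetricSpace P]
    (A M : Set X) (hA : A.Nonempty) (hM : M.Nonempty) (p0 : P)
    (f : X → EReal) (hf_ne_bot : ∀ x, f x ≠ ⊥) (hf_dom : ∃ x, f x ≠ ⊤)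
    (hf_attains : ∃ x ∈ M ∩ A, ∀ y ∈ M ∩ A, f x ≤ f y)
    (φ : X → P → EReal) (hφ_nonneg : ∀ x p, 0 ≤ φ x p)
    (hφ_zero : ∀ x p, (φ x p = 0 ↔ p = p0 ∧ x ∈ M))
    (hbdd : ∃ lam : ℝ, 0 ≤ lam ∧ ∃ c : ℝ, ∀ x ∈ A, ∀ p : P,
      (c : EReal) ≤ penFun f φ lam x p) :
    (⨆ lam : ℝ, ⨆ _ : (0 : ℝ) ≤ lam, ⨅ x ∈ A, ⨅ p : P, penFun f φ lam x p)
      = ⨆ η : ℝ, ⨆ _ : (0 : ℝ) < η, pertFun A f φ η := by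
  apply le_antisymm
  · refine iSup₂_le fun lam hlam => le_of_forall_lt fun b hb => ?_
    obtain ⟨c, hbc, hc⟩ := EReal.lt_iff_exists_real_btwn.mp hb
    obtain ⟨c', hbc', hc'⟩ := EReal.lt_iff_exists_real_btwn.mp hbc
    refine hbc'.trans_le (real_le_sup_pertFun A f hf_ne_bot φ hlam
      (EReal.coe_lt_coe_iff.mp hc') fun x hx p => hc.le.trans ?_)
    exact (iInf₂_le x hx).trans (iInf_le _ p)
  · refine iSup₂_le fun η hη => le_of_forall_lt fun b hb => ?_
    obtain ⟨c, hbc, hc⟩ := EReal.lt_iff_exists_real_btwn.mp hb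
    obtain ⟨lam, hlam, h⟩ := exists_le_penFun A f φ hφ_nonneg hbdd hη hc.le
    refine hbc.trans_le (le_trans ?_ (le_iSup₂ (f := fun (lam : ℝ) (_ : 0 ≤ lam) =>
      ⨅ x ∈ A, ⨅ p : P, penFun f φ lam x p) lam hlam))
    exact le_iInf₂ fun x hx => le_iInf fun p => h x hx p
end

section
/- Let x* ∈ Ω be a locally optimal solution of the problem min{f(x) : 0 ∈ G(x), x ∈ A}, let f be Lipschitz continuous near x* with Lipschitz constant L, and let G be metrically subregular with respect to A at (x*, 0) with constant τ > 0. Suppose there exist t₀, φ₀, ω₀ > 0 such that φ(t) ≥ φ₀·t and ω(t) ≥ ω₀·t for all t ∈ [0, t₀]. Then the singular penalty function F_λ is exact at (x*, 0), i.e. there exists λ₀ ≥ 0 such that (x*, 0) is a local minimizer of F_{λ₀} on A × ℝ₊; moreover, the least such exact penalty parameter λ*(x*) satisfies λ*(x*) ≤ L·(√φ₀·‖w‖ + √(ω₀ + φ₀‖w‖²)) / (2 ω₀ √φ₀ τ). -/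
/-!
Write `Ω = {x ∈ A | 0 ∈ G x}` and `d = d(x, Ω)`. Near `x*` two estimates hold.

* By local optimality and the Lipschitz condition, `f x* ≤ f x + L d` (`le_add_infDist`).
* By the triangle inequality and metric subregularity, `d(0, G x - p w) ≥ (τ d - p ‖w‖)⁺`, so the
  growth conditions bound the penalty term from below by `φ₀ ((τ d - p ‖w‖)⁺)² / p + ω₀ p`.
  Minimising this over `p > 0` gives at least `c τ d` with
  `c = 2 ω₀ √φ₀ / (√φ₀ ‖w‖ + √(ω₀ + φ₀ ‖w‖²))` (`growth_bound`, `singTerm_lower`).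

With `λ = L / (c τ)`, which is the claimed bound, `λ` times the penalty term is at least `L d`, so
`λ` itself is an exact penalty parameter. Both conclusions follow.
-/

open Filter Set Metric
open scoped ENNReal Classical

/-- The distance `d(0, G(x) − p·w) = inf_{y ∈ G(x)} ‖y − p·w‖`, valued in `[0,+∞]`
(equal to `+∞` when `G(x) = ∅`). -/
noncomputable def distShift {X Y : Type*} [NormedAddCommGroup Y] [NormedSpace ℝ Y]
    (G : X → Set Y) (w : Y) (x : X) (p : ℝ) : ℝ≥0∞ :=
  ⨅ y ∈ G x, edist y (p • w)

/-- The singular penalty term `φ̃(x,p)`:  `0` if `x ∈ Ω` and `p = 0`; `+∞` if `x ∉ Ω` and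
`p = 0`; and `p⁻¹ φ(d(0, G(x) − p·w)²) + ω(p)` if `p > 0`.  Here `Ω = G⁻¹(0) ∩ A`. -/
noncomputable def singTerm {X Y : Type*} [NormedAddCommGroup Y] [NormedSpace ℝ Y]
    (A : Set X) (G : X → Set Y) (w : Y) (φ : ℝ≥0∞ → ℝ≥0∞) (ω : ℝ → ℝ≥0∞)
    (x : X) (p : ℝ) : EReal :=
  if p = 0 then (if x ∈ A ∧ 0 ∈ G x then (0 : EReal) else ⊤)
  else (((p⁻¹ : ℝ) : EReal) * ((φ ((distShift G w x p) ^ 2) : ℝ≥0∞) : EReal)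
        + ((ω p : ℝ≥0∞) : EReal))

/-- The singular penalty function `F_λ(x,p) = f(x) + λ φ̃(x,p)` on `X × ℝ₊`. -/
noncomputable def singPen {X Y : Type*} [NormedAddCommGroup Y] [NormedSpace ℝ Y]
    (A : Set X) (G : X → Set Y) (w : Y) (φ : ℝ≥0∞ → ℝ≥0∞) (ω : ℝ → ℝ≥0∞)
    (f : X → EReal) (lam : ℝ) (x : X) (p : ℝ) : EReal :=
  f x + (lam : EReal) * singTerm A G w φ ω x p

/-- Minimisation over `p > 0` of the lower bound for the penalty term, where `D = τ d(x, Ω)` and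
`n = ‖w‖`. When `D ≥ p n` this is the arithmetic-geometric mean inequality combined with
`√(ω₀ + φ₀ n²)² - (√φ₀ n)² = ω₀`. -/
lemma growth_bound {φ0 ω0 n D p : ℝ} (hφ0 : 0 < φ0) (hω0 : 0 < ω0) (hn : 0 ≤ n) (hp : 0 < p) :
    2 * ω0 * √φ0 / (√φ0 * n + √(ω0 + φ0 * n ^ 2)) * D
      ≤ p⁻¹ * (φ0 * (max (D - p * n) 0) ^ 2) + ω0 * p := by
  have ha : 0 < √φ0 := Real.sqrt_pos.2 hφ0
  have ha2 : φ0 = √φ0 ^ 2 := (Real.sq_sqrt hφ0.le).symm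
  have hS : 0 < √(ω0 + φ0 * n ^ 2) := Real.sqrt_pos.2 (by positivity)
  have hS2 : √(ω0 + φ0 * n ^ 2) ^ 2 = ω0 + φ0 * n ^ 2 := Real.sq_sqrt (by positivity)
  set a := √φ0
  set S := √(ω0 + φ0 * n ^ 2)
  rw [ha2] at hS2
  have hω : ω0 = (S - a * n) * (S + a * n) := by linarith
  have hSan : a * n ≤ S := by
    by_contra! h
    nlinarith [mul_nonneg ha.le hn]
  have hden : 0 < a * n + S := by positivity
  rcases le_total (D - p * n) 0 with h | h
  · rw [max_eq_right h]
    have h1 : a * D ≤ a * n * p := by nlinarith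
    have h2 : 2 * (a * n * p) ≤ (a * n + S) * p := by nlinarith
    have : 2 * ω0 * a / (a * n + S) * D ≤ ω0 * p := by
      rw [div_mul_eq_mul_div, div_le_iff₀ hden]
      nlinarith
    simpa using this
  · rw [max_eq_left h]
    have e1 : 2 * ω0 * a / (a * n + S) = 2 * a * (S - a * n) := by
      rw [div_eq_iff hden.ne']
      linear_combination 2 * a * hω
    have e2 : p⁻¹ * (φ0 * (D - p * n) ^ 2) + ω0 * p - 2 * a * (S - a * n) * D
        = p⁻¹ * (a * D - S * p) ^ 2 := by
      rw [hω, ha2]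
      field_simp
      ring
    have : 0 ≤ p⁻¹ * (a * D - S * p) ^ 2 := by positivity
    rw [e1]
    linarith

lemma distShift_zero_le {X Y : Type*} [NormedAddCommGroup Y] [NormedSpace ℝ Y]
    (G : X → Set Y) (w : Y) (x : X) {p : ℝ} (hp : 0 ≤ p) :
    distShift G w x 0 ≤ distShift G w x p + ENNReal.ofReal (p * ‖w‖) := by
  rw [← tsub_le_iff_right]
  refine le_iInf₂ fun y hy => ?_
  rw [tsub_le_iff_right]
  refine (iInf₂_le y hy).trans ((edist_triangle y (p • w) ((0 : ℝ) • w)).trans ?_)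
  gcongr
  rw [edist_dist, zero_smul, dist_zero_right, norm_smul, Real.norm_of_nonneg hp]

/-- Error bound for the penalty term: it dominates a multiple of the distance to the feasible set,
provided that `p` and this distance are so small that the growth conditions on `ω` and `φ` apply. -/
lemma singTerm_lower {X Y : Type*} [MetricSpace X] [NormedAddCommGroup Y] [NormedSpace ℝ Y]
    {A : Set X} {G : X → Set Y} {w : Y} {φ : ℝ≥0∞ → ℝ≥0∞} {ω : ℝ → ℝ≥0∞}
    (hφ_mono : Monotone φ) {τ t0 φ0 ω0 : ℝ} (hτ : 0 < τ) (hφ0 : 0 < φ0)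
    (hω0 : 0 < ω0)
    (hφ_growth : ∀ t : ℝ≥0∞, t ≤ ENNReal.ofReal t0 → ENNReal.ofReal φ0 * t ≤ φ t)
    (hω_growth : ∀ p : ℝ, 0 ≤ p → p ≤ t0 → ENNReal.ofReal (ω0 * p) ≤ ω p)
    {x : X} {p : ℝ} (hne : {x ∈ A | 0 ∈ G x}.Nonempty)
    (hsub : ENNReal.ofReal τ * Metric.infEDist x {x ∈ A | 0 ∈ G x} ≤ distShift G w x 0)
    (hp : 0 ≤ p) (hpt : p ≤ t0) (hx : (τ * Metric.infDist x {x ∈ A | 0 ∈ G x}) ^ 2 ≤ t0) :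
    ((2 * ω0 * √φ0 / (√φ0 * ‖w‖ + √(ω0 + φ0 * ‖w‖ ^ 2))
        * (τ * Metric.infDist x {x ∈ A | 0 ∈ G x}) : ℝ) : EReal) ≤ singTerm A G w φ ω x p := by
  unfold singTerm
  split_ifs with h0 hmem
  · have hmem' : x ∈ {x ∈ A | 0 ∈ G x} := hmem
    rw [Metric.infDist_zero_of_mem hmem']
    simp
  · exact le_top
  have hp' : 0 < p := lt_of_le_of_ne hp (Ne.symm h0)
  set D := τ * Metric.infDist x {x ∈ A | 0 ∈ G x} with hD
  have hD0 : 0 ≤ D := mul_nonneg hτ.le Metric.infDist_nonneg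
  have hu0 : 0 ≤ max (D - p * ‖w‖) 0 := le_max_right _ _
  have huD : max (D - p * ‖w‖) 0 ≤ D :=
    max_le (sub_le_self _ (by positivity)) hD0
  have hus : ENNReal.ofReal (max (D - p * ‖w‖) 0) ≤ distShift G w x p := by
    rw [ENNReal.ofReal_max, ENNReal.ofReal_zero, max_eq_left (zero_le),
      ENNReal.ofReal_sub _ (by positivity), tsub_le_iff_right]
    refine le_trans (le_of_eq ?_) (hsub.trans (distShift_zero_le G w x hp))
    rw [hD, ENNReal.ofReal_mul hτ.le, Metric.infDist,
      ENNReal.ofReal_toReal (Metric.infEDist_ne_top hne)]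
  set u := max (D - p * ‖w‖) 0 with hu
  have hφ : ENNReal.ofReal (φ0 * u ^ 2) ≤ φ ((distShift G w x p) ^ 2) := by
    rw [ENNReal.ofReal_mul hφ0.le]
    refine (hφ_growth _ (ENNReal.ofReal_le_ofReal ?_)).trans (hφ_mono ?_)
    · exact (pow_le_pow_left₀ hu0 huD 2).trans hx
    · rw [ENNReal.ofReal_pow hu0]
      gcongr
  have hφ' : ((φ0 * u ^ 2 : ℝ) : EReal) ≤ ((φ ((distShift G w x p) ^ 2) : ℝ≥0∞) : EReal) := by
    have := EReal.coe_ennreal_le_coe_ennreal_iff.2 hφ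
    rwa [EReal.coe_ennreal_ofReal, max_eq_left (by positivity)] at this
  have hω' : ((ω0 * p : ℝ) : EReal) ≤ ((ω p : ℝ≥0∞) : EReal) := by
    have := EReal.coe_ennreal_le_coe_ennreal_iff.2 (hω_growth p hp hpt)
    rwa [EReal.coe_ennreal_ofReal, max_eq_left (by positivity)] at this
  have hmain := growth_bound (D := D) hφ0 hω0 (norm_nonneg w) hp'
  rw [← hu] at hmain
  refine (EReal.coe_le_coe_iff.2 hmain).trans ?_
  rw [EReal.coe_add, EReal.coe_mul]
  refine add_le_add (mul_le_mul_of_nonneg_left hφ' ?_) hω'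
  exact EReal.coe_nonneg.2 (by positivity)

/-- The bound `f x* ≤ f x + L d(x, S)` near a local minimizer `x*` of `f` on `S`. A point of `S`
nearly closest to `x` is within about `2 d(x, x*)` of `x*`, hence the factor `3` in `hx`. -/
lemma le_add_infDist {X : Type*} [MetricSpace X] {f : X → EReal} {S : Set X} {xs x : X}
    {L ρ : ℝ} (hS : xs ∈ S)
    (hbot : f x ≠ ⊥) (htop : f x ≠ ⊤) (hfs : f xs ≠ ⊥) (hfs' : f xs ≠ ⊤)
    (hmin : ∀ y ∈ Metric.ball xs ρ, y ∈ S → f xs ≤ f y) (hL : 0 ≤ L)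
    (hlip : ∀ y ∈ Metric.ball xs ρ, ∀ z ∈ Metric.ball xs ρ,
      f y ≤ f z + ((L * dist y z : ℝ) : EReal))
    (hx : 3 * dist x xs < ρ) :
    f xs ≤ f x + ((L * Metric.infDist x S : ℝ) : EReal) := by
  lift f xs to ℝ using ⟨hfs', hfs⟩ with b hb
  lift f x to ℝ using ⟨htop, hbot⟩ with a ha
  have hd : 0 ≤ dist x xs := dist_nonneg
  have hle : Metric.infDist x S ≤ dist x xs := Metric.infDist_le_dist_of_mem hS
  have key : ∀ r, Metric.infDist x S < r → r < ρ - dist x xs → b ≤ a + L * r := by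
    intro r hr hr'
    obtain ⟨y, hy, hxy⟩ := (Metric.infDist_lt_iff ⟨xs, hS⟩).1 hr
    have hyb : y ∈ Metric.ball xs ρ := by
      rw [Metric.mem_ball]
      linarith [dist_triangle_left y xs x]
    have hxb : x ∈ Metric.ball xs ρ := by
      rw [Metric.mem_ball]
      linarith
    have h := (hmin y hyb hy).trans (hlip y hyb x hxb)
    rw [← ha, ← EReal.coe_add, EReal.coe_le_coe_iff, dist_comm] at h
    exact h.trans (by gcongr)
  rw [← EReal.coe_add, EReal.coe_le_coe_iff]
  have hlt : Metric.infDist x S < ρ - dist x xs := by linarith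
  have hc : Tendsto (fun r => a + L * r) (nhdsWithin (Metric.infDist x S) (Ioi (Metric.infDist x S)))
      (nhds (a + L * Metric.infDist x S)) :=
    ((continuous_const.add (continuous_const.mul continuous_id)).tendsto _).mono_left
      nhdsWithin_le_nhds
  refine ge_of_tendsto hc ?_
  filter_upwards [Ioo_mem_nhdsGT hlt] with r hr using key r hr.1 hr.2

/-- local exactness of the singular penalty function at a locally optimal
solution `x*`, with the explicit bound on the least exact penalty parameter. -/
theorem singular_penalty_local_exactness {X Y : Type*} [MetricSpace X]
    [NormedAddCommGroup Y] [NormedSpace ℝ Y]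
    (A : Set X) (hA : A.Nonempty)
    (G : X → Set Y) (hGclosed : ∀ x, IsClosed (G x))
    (f : X → EReal) (hf_ne_bot : ∀ x, f x ≠ ⊥)
    (hf_attains : ∃ x ∈ {x ∈ A | 0 ∈ G x}, ∀ y ∈ {x ∈ A | 0 ∈ G x}, f x ≤ f y)
    (w : Y)
    (φ : ℝ≥0∞ → ℝ≥0∞) (hφ_mono : Monotone φ) (hφ_zero : ∀ t, φ t = 0 ↔ t = 0)
    (ω : ℝ → ℝ≥0∞) (hω_mono : MonotoneOn ω (Set.Ici 0))
    (hω_zero : ∀ p : ℝ, 0 ≤ p → (ω p = 0 ↔ p = 0))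
    (xs : X) (hxs : xs ∈ {x ∈ A | 0 ∈ G x})
    (hxs_locmin : ∀ᶠ y in nhdsWithin xs {x ∈ A | 0 ∈ G x}, f xs ≤ f y)
    (L : ℝ) (hL : 0 ≤ L)
    (hf_lip : ∃ r : ℝ, 0 < r ∧ (∀ y ∈ Metric.ball xs r, f y ≠ ⊤) ∧
      ∀ y ∈ Metric.ball xs r, ∀ z ∈ Metric.ball xs r,
        f y ≤ f z + ((L * dist y z : ℝ) : EReal))
    (τ : ℝ) (hτ : 0 < τ)
    (hsubreg : ∃ U ∈ nhds xs, ∀ x ∈ U ∩ A,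
      ENNReal.ofReal τ * EMetric.infEdist x {x ∈ A | 0 ∈ G x} ≤ distShift G w x 0)
    (t0 φ0 ω0 : ℝ) (ht0 : 0 < t0) (hφ0 : 0 < φ0) (hω0 : 0 < ω0)
    (hφ_growth : ∀ t : ℝ≥0∞, t ≤ ENNReal.ofReal t0 → ENNReal.ofReal φ0 * t ≤ φ t)
    (hω_growth : ∀ p : ℝ, 0 ≤ p → p ≤ t0 → ENNReal.ofReal (ω0 * p) ≤ ω p) :
    (∃ lam0 : ℝ, 0 ≤ lam0 ∧
      ∀ᶠ z in nhdsWithin (xs, (0 : ℝ)) (A ×ˢ Set.Ici (0 : ℝ)),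
        singPen A G w φ ω f lam0 xs 0 ≤ singPen A G w φ ω f lam0 z.1 z.2) ∧
    sInf {lam0 : ℝ | 0 ≤ lam0 ∧
        ∀ᶠ z in nhdsWithin (xs, (0 : ℝ)) (A ×ˢ Set.Ici (0 : ℝ)),
          singPen A G w φ ω f lam0 xs 0 ≤ singPen A G w φ ω f lam0 z.1 z.2}
      ≤ L * (Real.sqrt φ0 * ‖w‖ + Real.sqrt (ω0 + φ0 * ‖w‖ ^ 2))
          / (2 * ω0 * Real.sqrt φ0 * τ) := by
  set lam := L * (Real.sqrt φ0 * ‖w‖ + Real.sqrt (ω0 + φ0 * ‖w‖ ^ 2))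
          / (2 * ω0 * Real.sqrt φ0 * τ) with hlam
  have hlam0 : 0 ≤ lam := by positivity
  suffices hex : ∀ᶠ z in nhdsWithin (xs, (0 : ℝ)) (A ×ˢ Set.Ici (0 : ℝ)),
        singPen A G w φ ω f lam xs 0 ≤ singPen A G w φ ω f lam z.1 z.2 from
    ⟨⟨lam, hlam0, hex⟩, csInf_le ⟨0, fun _ h => h.1⟩ ⟨hlam0, hex⟩⟩
  obtain ⟨r, hr, hfin, hlip⟩ := hf_lip
  obtain ⟨U, hU, hsub⟩ := hsubreg
  obtain ⟨r', hr', hmin⟩ := Metric.mem_nhdsWithin_iff.1 hxs_locmin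
  have hρ : 0 < min r r' := lt_min hr hr'
  have hne : {x ∈ A | 0 ∈ G x}.Nonempty := ⟨xs, hxs⟩
  have hfst : Tendsto Prod.fst (nhdsWithin (xs, (0 : ℝ)) (A ×ˢ Set.Ici (0 : ℝ))) (nhds xs) :=
    (continuous_fst.tendsto (xs, (0 : ℝ))).mono_left nhdsWithin_le_nhds
  have hsnd : Tendsto Prod.snd (nhdsWithin (xs, (0 : ℝ)) (A ×ˢ Set.Ici (0 : ℝ))) (nhds 0) :=
    (continuous_snd.tendsto (xs, (0 : ℝ))).mono_left nhdsWithin_le_nhds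
  have hq : ∀ᶠ x in nhds xs, (τ * Metric.infDist x {x ∈ A | 0 ∈ G x}) ^ 2 < t0 := by
    have hc : Continuous fun x => (τ * Metric.infDist x {x ∈ A | 0 ∈ G x}) ^ 2 :=
      (continuous_const.mul (Metric.continuous_infDist_pt _)).pow 2
    refine hc.continuousAt.eventually_lt continuousAt_const ?_
    simpa [Metric.infDist_zero_of_mem hxs] using ht0
  filter_upwards [hfst.eventually hU, hfst.eventually hq,
    hfst.eventually (Metric.ball_mem_nhds xs (show 0 < min r r' / 3 by positivity)),
    hsnd.eventually (gt_mem_nhds ht0), self_mem_nhdsWithin] with z hzU hzq hzb hzt hzA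
  obtain ⟨x, p⟩ := z
  obtain ⟨hxA, hp⟩ := hzA
  simp only [Set.mem_Ici] at hzU hzq hzb hzt hxA hp
  have hb : 3 * dist x xs < min r r' := by
    have := Metric.mem_ball.1 hzb
    linarith
  have hxr : x ∈ Metric.ball xs r := by
    rw [Metric.mem_ball]
    linarith [min_le_left r r', dist_nonneg (x := x) (y := xs)]
  have h1 : f xs ≤ f x + ((L * Metric.infDist x {x ∈ A | 0 ∈ G x} : ℝ) : EReal) :=
    le_add_infDist (ρ := min r r') hxs (hf_ne_bot x) (hfin x hxr) (hf_ne_bot xs)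
      (hfin xs (Metric.mem_ball_self hr))
      (fun y hy hyS => hmin ⟨Metric.ball_subset_ball (min_le_right _ _) hy, hyS⟩) hL
      (fun y hy z hz => hlip y (Metric.ball_subset_ball (min_le_left _ _) hy) z
        (Metric.ball_subset_ball (min_le_left _ _) hz)) hb
  have h2 := singTerm_lower (w := w) hφ_mono hτ hφ0 hω0 hφ_growth hω_growth hne
    (hsub x ⟨hzU, hxA⟩) hp hzt.le hzq.le
  have h3 := mul_le_mul_of_nonneg_left h2 (EReal.coe_nonneg.2 hlam0)
  have hS : 0 < √(ω0 + φ0 * ‖w‖ ^ 2) := Real.sqrt_pos.2 (by positivity)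
  have hsq : 0 < √φ0 := Real.sqrt_pos.2 hφ0
  -- `lam` is the multiplier for which the error bound yields exactly the Lipschitz loss.
  have e : lam * (2 * ω0 * √φ0 / (√φ0 * ‖w‖ + √(ω0 + φ0 * ‖w‖ ^ 2))
      * (τ * Metric.infDist x {x ∈ A | 0 ∈ G x})) = L * Metric.infDist x {x ∈ A | 0 ∈ G x} := by
    have : √φ0 * ‖w‖ + √(ω0 + φ0 * ‖w‖ ^ 2) ≠ 0 := by positivity
    rw [hlam]
    field_simp
  rw [← EReal.coe_mul, e] at h3
  have h0 : singPen A G w φ ω f lam xs 0 = f xs := by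
    have hxs' : xs ∈ A ∧ 0 ∈ G xs := hxs
    simp [singPen, singTerm, hxs']
  rw [h0]
  exact h1.trans (add_le_add le_rfl h3)
end
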